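/- arXiv:2407.04817 — 2 statements merged into one kernel-verified Lean document; each statement's English description precedes it below -/
import Mathlib

section
/- Let R be a commutative ring, let C be an n × n matrix over R and let J, N be n × m matrices over R such that C^tr·J = N and C + C^tr = N·N^tr. Then (I_n − J·J^tr·C^tr)·(I_n − J·J^tr·C) = I_n; in particular, the matrix I_n − J·J^tr·C^tr is invertible with inverse I_n − J·J^tr·C. (Applied with C the Cartan matrix of a gentle bound quiver, J = Ĵ the matrix whose columns are the incidence vectors of the anti-walks of the associated marked ribbon graph (G,≤), and N = Inc(G), this shows that the Coxeter transformation Ψ_A = I_n − ĴĴ^trC^tr of the gentle algebra A = kQ/I, in the basis of indecomposable projectives, is invertible with inverse I_n − ĴĴ^trC.) -/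
set_option autoImplicit false

open scoped Matrix

/-- If `Cᵀ J = N` and `C + Cᵀ = N Nᵀ`, then
`(1 - J Jᵀ Cᵀ) (1 - J Jᵀ C) = 1`; in particular `1 - J Jᵀ Cᵀ` is invertible with
inverse `1 - J Jᵀ C`.  (Applied with `C` the Cartan matrix of a gentle bound quiver,
`J = Ĵ` the matrix of incidence vectors of anti-walks, and `N = Inc(G)`, this shows that
the Coxeter transformation `Ψ_A = 1 - Ĵ Ĵᵀ Cᵀ` is invertible with inverse `1 - Ĵ Ĵᵀ C`.) -/
theorem stmt18 {R : Type} [CommRing R] {n m : Type} [Fintype n] [Fintype m] [DecidableEq n]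
    (C : Matrix n n R) (J N : Matrix n m R)
    (h1 : Cᵀ * J = N) (h2 : C + Cᵀ = N * Nᵀ) :
    (1 - J * Jᵀ * Cᵀ) * (1 - J * Jᵀ * C) = 1 ∧
    (1 - J * Jᵀ * C) * (1 - J * Jᵀ * Cᵀ) = 1 := by
  have h3 : Cᵀ * (J * Jᵀ) * C = C + Cᵀ := by
    rw [h2, ← h1, Matrix.transpose_mul, Matrix.transpose_transpose]
    simp only [Matrix.mul_assoc]
  have key : (1 - J * Jᵀ * Cᵀ) * (1 - J * Jᵀ * C) = 1 := by
    generalize J * Jᵀ = P at h3 ⊢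
    have h4 : P * Cᵀ * (P * C) = P * C + P * Cᵀ := by
      rw [← mul_add, ← h3]
      simp only [mul_assoc]
    rw [sub_mul, mul_sub, mul_sub, h4, one_mul, one_mul, mul_one]
    abel
  exact ⟨key, mul_eq_one_comm.mp key⟩
end

section
/- Let (Q,I) be a gentle bound quiver with marked ribbon graph (G,≤) = △(Q,I) and Cartan matrix C; set n := |Q0| = |E(G)| and m := |V(G)|. Let Ĵ be the E(G) × V(G) integer matrix whose column at a vertex α is the incidence vector inc(Ǒ_α) of the unique anti-walk Ǒ_α with target vertex α, and let ξ be the permutation of V(G) sending α to the source vertex of Ǒ_α. Then: (i) I_m − Ĵ^tr·C·Ĵ is the signed permutation matrix sending the basis vector e_α to (−1)^{ℓ(Ǒ_α)} e_{ξ(α)} for every vertex α; (ii) the characteristic polynomial of the n × n matrix I_n − Ĵ·Ĵ^tr·C^tr equals (z − 1)^{n − m} · ∏_O ( z^{|O|} − ∏_{α ∈ O} (−1)^{ℓ(Ǒ_α)} ), where the product runs over the orbits O of the permutation ξ on V(G). Since I_n − ĴĴ^trC^tr is the matrix of the Coxeter transformation of the gentle algebra A = kQ/I in the basis of indecomposable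 projectives, (ii) computes the Coxeter polynomial ψ_A(z); rewritten via the faces of (G,≤) it yields the formula ψ_A(z) = (z−1)^{|Q1|−|Q0|} ∏_{n′>0, m′≥0} (z^{n′} − (−1)^{n′+m′})^{φ_A(n′,m′)}, where φ_A is the Avella-Alaminos–Geiss invariant of A. -/
set_option autoImplicit false

attribute [local instance] Classical.propDecidable

/-- A bound-quiver datum: a quiver (source and target maps on a set of arrows) together
with a set of length-two relations; `rel a b` means that the length-two path `ab`
(composable, i.e. `src a = tgt b`; paths are written from right to left) lies in the
generating set of relations of the ideal `I`. -/
structure BQuiv (V A : Type) where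
  src : A → V
  tgt : A → V
  rel : A → A → Prop

namespace BQuiv

variable {V A : Type}

/-- `l` is (the list of arrows of) a path of the quiver, written from right to left:
`l = [a₁, a₂, …, a_ℓ]` represents `a₁a₂⋯a_ℓ` and we ask `src aₜ = tgt aₜ₊₁`. -/
def PathChain (Q : BQuiv V A) (l : List A) : Prop :=
  l.Chain' (fun a b => Q.src a = Q.tgt b)

/-- The degree of a vertex: the number of outgoing plus the number of incoming arrows. -/
noncomputable def deg (Q : BQuiv V A) (v : V) : ℕ :=
  Nat.card {a : A // Q.src a = v} + Nat.card {a : A // Q.tgt a = v}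

/-- `(Q, I)` is a gentle bound quiver. -/
structure IsGentle (Q : BQuiv V A) : Prop where
  /-- relations are composable length-two paths -/
  rel_comp : ∀ a b, Q.rel a b → Q.src a = Q.tgt b
  /-- at most two outgoing arrows at every vertex -/
  out_le : ∀ v, Nat.card {a : A // Q.src a = v} ≤ 2
  /-- at most two incoming arrows at every vertex -/
  in_le : ∀ v, Nat.card {a : A // Q.tgt a = v} ≤ 2
  /-- for every arrow `b` there is at most one arrow `a` with `ab ∉ I` -/
  unique_nonrel_post : ∀ b a a', Q.src a = Q.tgt b → Q.src a' = Q.tgt b →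
    ¬ Q.rel a b → ¬ Q.rel a' b → a = a'
  /-- for every arrow `b` there is at most one arrow `c` with `bc ∉ I` -/
  unique_nonrel_pre : ∀ b c c', Q.src b = Q.tgt c → Q.src b = Q.tgt c' →
    ¬ Q.rel b c → ¬ Q.rel b c' → c = c'
  /-- for every arrow `b` there is at most one arrow `a` with `ab ∈ I` -/
  unique_rel_post : ∀ b a a', Q.rel a b → Q.rel a' b → a = a'
  /-- for every arrow `b` there is at most one arrow `c` with `bc ∈ I` -/
  unique_rel_pre : ∀ b c c', Q.rel b c → Q.rel b c' → c = c'
  /-- admissibility: there is `m ≥ 2` such that every path of length `m` contains a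
  length-two subpath lying in the relation set -/
  admissible : ∃ m, 2 ≤ m ∧ ∀ l : List A, l.length = m → Q.PathChain l →
    ¬ l.Chain' (fun a b => ¬ Q.rel a b)
  /-- the quiver is connected -/
  connected : ∀ u v : V, Relation.ReflTransGen
    (fun x y => ∃ a, (Q.src a = x ∧ Q.tgt a = y) ∨ (Q.src a = y ∧ Q.tgt a = x)) u v
  /-- the quiver has at least one arrow -/
  has_arrow : Nonempty A

/-- A path of the quiver `Q`, with a base (source) vertex so that trivial paths make
sense.  The arrows are written from right to left. -/
structure Path (Q : BQuiv V A) where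
  base : V
  arrows : List A
  chain : arrows.Chain' (fun a b => Q.src a = Q.tgt b)
  base_eq : ∀ a, arrows.getLast? = some a → Q.src a = base

variable {Q : BQuiv V A}

/-- The source vertex of a path. -/
def Path.srcV (p : Path Q) : V := p.base

/-- The target vertex of a path. -/
def Path.tgtV (p : Path Q) : V := p.arrows.head?.elim p.base Q.tgt

/-- The vertex of a path sitting between its first `n` arrows and the rest:
the center of the corresponding split of the path. -/
def Path.vertexAt (p : Path Q) (n : ℕ) : V :=
  (p.arrows.drop n).head?.elim p.base Q.tgt

/-- A path is permitted if none of its length-two subpaths is a relation. -/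
def Path.Permitted (p : Path Q) : Prop :=
  p.arrows.Chain' (fun a b => ¬ Q.rel a b)

/-- A path is forbidden if each of its length-two subpaths is a relation. -/
def Path.Forbidden (p : Path Q) : Prop :=
  p.arrows.Chain' (fun a b => Q.rel a b)

/-- Permitted threads: maximal non-trivial permitted paths, together with the trivial
paths `e_i` at vertices `i` with `deg i = 1`, or `deg i = 2` with the two arrows
`α, β` at `i` satisfying `src α = tgt β = i` and `αβ ∉ I`. -/
def IsPermThread (Q : BQuiv V A) (p : Path Q) : Prop :=
  (p.arrows ≠ [] ∧ p.Permitted ∧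
    (∀ a b, p.arrows.head? = some b → Q.src a = Q.tgt b → Q.rel a b) ∧
    (∀ a c, p.arrows.getLast? = some a → Q.src a = Q.tgt c → Q.rel a c)) ∨
  (p.arrows = [] ∧ (Q.deg p.base = 1 ∨ (Q.deg p.base = 2 ∧
    ∃ α β, Q.src α = p.base ∧ Q.tgt β = p.base ∧ ¬ Q.rel α β)))

/-- Forbidden threads: maximal non-trivial forbidden paths, together with the trivial
paths `e_i` at vertices `i` with `deg i = 1`, or `deg i = 2` with the two arrows
`α, β` at `i` satisfying `src α = tgt β = i` and `αβ ∈ I`. -/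
def IsForbThread (Q : BQuiv V A) (p : Path Q) : Prop :=
  (p.arrows ≠ [] ∧ p.Forbidden ∧
    (∀ a b, p.arrows.head? = some b → Q.src a = Q.tgt b → ¬ Q.rel a b) ∧
    (∀ a c, p.arrows.getLast? = some a → Q.src a = Q.tgt c → ¬ Q.rel a c)) ∨
  (p.arrows = [] ∧ (Q.deg p.base = 1 ∨ (Q.deg p.base = 2 ∧
    ∃ α β, Q.src α = p.base ∧ Q.tgt β = p.base ∧ Q.rel α β)))

end BQuiv

namespace BQuiv

variable {V A : Type}

/-- The type of permitted threads of `(Q, I)`: the vertices of the associated marked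
ribbon graph `△(Q, I)`. -/
def PThread (Q : BQuiv V A) : Type := {p : Path Q // IsPermThread Q p}

/-- The type of split permitted threads of `(Q, I)`: a permitted thread together with a
cut position.  These are the half-edges of the associated marked ribbon graph
`△(Q, I)`. -/
def PSplit (Q : BQuiv V A) : Type := {x : PThread Q × ℕ // x.2 ≤ x.1.1.arrows.length}

/-- The thread (vertex of `△(Q, I)`) over which a split permitted thread lies. -/
def PSplit.thread {Q : BQuiv V A} (x : PSplit Q) : PThread Q := x.1.1

/-- The cut position of a split permitted thread. -/
def PSplit.idx {Q : BQuiv V A} (x : PSplit Q) : ℕ := x.1.2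

/-- The center of a split permitted thread `(η″, η′)`: the vertex `s(η″) = t(η′)`.
The centers realize the bijection between the edges of `△(Q, I)` and the vertices
of `Q`. -/
def PSplit.center {Q : BQuiv V A} (x : PSplit Q) : V :=
  x.1.1.1.vertexAt x.1.2

end BQuiv

namespace BQuiv

variable {V A : Type}

/-- The Cartan matrix of the gentle algebra `kQ/I`: its `(i, j)` entry is the number of
permitted paths with source `j` and target `i` (which equals `dim_k Hom(P_i, P_j)`). -/
noncomputable def cartan (Q : BQuiv V A) : Matrix V V ℤ :=
  fun i j => (Nat.card {p : Path Q // p.Permitted ∧ p.base = j ∧ p.tgtV = i} : ℤ)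

/-- The (edge-vertex) incidence matrix of the marked ribbon graph `△(Q, I)`, with edges
identified with `Q₀` (via centers) and vertices with the permitted threads (transported
along a bijection `e` with a finite index type `W`): the entry at `(i, w)` is the number
of half-edges of the edge `i` incident to the vertex `e w`, i.e. the number of split
permitted threads with center `i` lying over the thread `e w`. -/
noncomputable def dInc (Q : BQuiv V A) {W : Type} (e : W ≃ PThread Q) : Matrix V W ℤ :=
  fun i w => (Nat.card {x : PSplit Q // x.center = i ∧ x.thread = e w} : ℤ)

end BQuiv

namespace BQuiv

variable {V A : Type}

/-- An ordered edge of the marked ribbon graph `△(Q, I)`: a pair `(h′, h″)` of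
half-edges with `h″ = ι h′`, i.e. a pair of distinct split permitted threads with the
same center.  The first component is the target half-edge, the second the source
half-edge. -/
def DOE (Q : BQuiv V A) : Type :=
  {p : PSplit Q × PSplit Q // p.1 ≠ p.2 ∧ p.1.center = p.2.center}

/-- The target half-edge of an ordered edge of `△(Q, I)`. -/
def DOE.tS {Q : BQuiv V A} (i : DOE Q) : PSplit Q := i.1.1

/-- The source half-edge of an ordered edge of `△(Q, I)`. -/
def DOE.sS {Q : BQuiv V A} (i : DOE Q) : PSplit Q := i.1.2

/-- The target vertex (a permitted thread) of an ordered edge of `△(Q, I)`. -/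
def DOE.tvx {Q : BQuiv V A} (i : DOE Q) : PThread Q := i.1.1.thread

/-- The source vertex (a permitted thread) of an ordered edge of `△(Q, I)`. -/
def DOE.svx {Q : BQuiv V A} (i : DOE Q) : PThread Q := i.1.2.thread

/-- The underlying (unordered) edge of an ordered edge of `△(Q, I)`, identified with a
vertex of `Q` via centers. -/
def DOE.ctr {Q : BQuiv V A} (i : DOE Q) : V := i.1.1.center

/-- The inverse of an ordered edge of `△(Q, I)`. -/
def DOE.inv {Q : BQuiv V A} (i : DOE Q) : DOE Q :=
  ⟨(i.1.2, i.1.1), ⟨Ne.symm i.2.1, i.2.2.symm⟩⟩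

/-- `l` is (the list of ordered edges of) a walk of `△(Q, I)`, written from right to
left. -/
def IsDWalk (Q : BQuiv V A) (l : List (DOE Q)) : Prop :=
  l.Chain' (fun i j => DOE.svx i = DOE.tvx j)

/-- The walk `l` of `△(Q, I)` is reduced. -/
def IsDRed (Q : BQuiv V A) (l : List (DOE Q)) : Prop :=
  l.Chain' (fun i j => j ≠ DOE.inv i)

/-- `y` is the direct successor of `x` in the half-edge order of `△(Q, I)`: `x` and `y`
lie over the same thread and `y` covers `x` (the half-edge `h^α_t` corresponds to the
split `(α, t)` and `h^α_t < h^α_{t-1}` is a covering). -/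
def DSucc {Q : BQuiv V A} (x y : PSplit Q) : Prop :=
  x.thread = y.thread ∧ x.idx = y.idx + 1

/-- Anti-walks of `△(Q, I)`: non-trivial walks `i₁⋯i_{L+1}` in which the source
half-edge of `iₜ` is the direct successor of the target half-edge of `iₜ₊₁` with
respect to `≤`, maximal with this property. -/
def IsAntiDW (Q : BQuiv V A) (l : List (DOE Q)) : Prop :=
  l ≠ [] ∧ IsDWalk Q l ∧
  l.Chain' (fun i j => DSucc (DOE.tS j) (DOE.sS i)) ∧
  (∀ i, l.head? = some i → ∀ i0 : DOE Q, ¬ DSucc (DOE.tS i) (DOE.sS i0)) ∧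
  (∀ i, l.getLast? = some i → ∀ i2 : DOE Q, ¬ DSucc (DOE.tS i2) (DOE.sS i)) 

/-- The incidence vector of a walk `w = i₁⋯i_{L+1}` of `△(Q, I)`:
`inc(w) = Σₜ (-1)ᵗ e_{ē(i_{t+1})} ∈ ℤ^{Q₀}`. -/
noncomputable def incVec {Q : BQuiv V A} : List (DOE Q) → V → ℤ
  | [] => fun _ => 0
  | i :: l => fun v => (if DOE.ctr i = v then 1 else 0) - incVec l v

end BQuiv

open BQuiv Polynomial
open scoped Matrix

theorem cyc_charpoly {B : Type} [Fintype B] [DecidableEq B] (M : Matrix B B ℤ)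
    (σ : Equiv.Perm B) (s : B → ℤ) (hs : ∀ b, s b ≠ 0)
    (hM : ∀ β α, M β α = if β = σ α then s α else 0) (r : B)
    (hr : ∀ b, σ.SameCycle r b) :
    M.charpoly = X ^ (Fintype.card B) - C (∏ b, s b) := by
  have hc : σ.IsCycleOn ((Finset.univ : Finset B) : Set B) := by
    refine ⟨by simp, fun x _ y _ => (hr x).symm.trans (hr y)⟩
  have hpow : ∀ j : ℕ, (M ^ j) *ᵥ (Pi.single r 1) =
      (∏ i ∈ Finset.range j, s ((σ ^ i) r)) • (Pi.single ((σ ^ j) r) 1 : B → ℤ) := by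
    intro j
    induction j with
    | zero => rw [pow_zero, Matrix.one_mulVec]; simp
    | succ j ih =>
      rw [pow_succ', ← Matrix.mulVec_mulVec, ih, Matrix.mulVec_smul, Finset.prod_range_succ,
        mul_smul]
      congr 1
      ext b
      simp only [Matrix.mulVec_single_one, Matrix.col_apply, hM, Pi.smul_apply, pow_succ',
        Equiv.Perm.mul_apply, Pi.single_apply, smul_eq_mul]
      simp
  have hinj : ∀ i ∈ Finset.range (Fintype.card B), ∀ j ∈ Finset.range (Fintype.card B),
      (σ ^ i) r = (σ ^ j) r → i = j := by
    intro i hi j hj h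
    rw [hc.pow_apply_eq_pow_apply (Finset.mem_univ r)] at h
    simp only [Finset.mem_range] at hi hj
    rw [Finset.card_univ] at h
    exact Nat.ModEq.eq_of_lt_of_lt h hi hj
  have hprod : ∏ i ∈ Finset.range (Fintype.card B), s ((σ ^ i) r) = ∏ b, s b := by
    refine Finset.prod_bij (fun i _ => (σ ^ i) r) (by simp) (fun i hi j hj h => hinj i hi j hj h) ?_
      (by simp)
    intro b _
    obtain ⟨n, hn, h⟩ := hc.exists_pow_eq (Finset.mem_univ r) (Finset.mem_univ b)
    exact ⟨n, by simpa using hn, h⟩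
  have hcard : (σ ^ (Fintype.card B)) r = r :=
    (hc.pow_apply_eq (Finset.mem_univ r)).2 (by simp)
  have : Nonempty B := ⟨r⟩
  have hk : Fintype.card B ≠ 0 := Fintype.card_ne_zero
  set q : ℤ[X] := X ^ (Fintype.card B) - C (∏ b, s b) with hq
  have hqm : q.Monic := monic_X_pow_sub_C _ hk
  have hqd : q.degree = Fintype.card B := degree_X_pow_sub_C (Nat.pos_of_ne_zero hk) _
  have hd : (M.charpoly - q).degree < Fintype.card B := by
    have h := Polynomial.degree_sub_lt (p := M.charpoly) (q := q)
      (by rw [hqd, Matrix.charpoly_degree_eq_dim]) (Matrix.charpoly_monic M).ne_zero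
      (by rw [hqm.leadingCoeff, (Matrix.charpoly_monic M).leadingCoeff])
    rwa [Matrix.charpoly_degree_eq_dim] at h
  have hq0 : (aeval M q) *ᵥ (Pi.single r 1 : B → ℤ) = 0 := by
    rw [hq, map_sub, map_pow, aeval_X, aeval_C, Matrix.sub_mulVec, hpow, hprod, hcard,
      Algebra.algebraMap_eq_smul_one, Matrix.smul_mulVec, Matrix.one_mulVec, sub_self]
  have hz : (aeval M (M.charpoly - q)) *ᵥ (Pi.single r 1 : B → ℤ) = 0 := by
    rw [map_sub, Matrix.sub_mulVec, hq0, Matrix.aeval_self_charpoly, sub_zero,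
      Matrix.zero_mulVec]
  rw [← sub_eq_zero]
  set d := M.charpoly - q with hdd
  have hnd : d.natDegree < Fintype.card B := by
    by_cases h0 : d = 0
    · rw [h0]; simpa using Nat.pos_of_ne_zero hk
    · exact (Polynomial.natDegree_lt_iff_degree_lt h0).2 hd
  rw [aeval_eq_sum_range' hnd, Matrix.sum_mulVec] at hz
  ext j
  rw [coeff_zero]
  by_cases hj : j < Fintype.card B
  · have := congrFun hz ((σ ^ j) r)
    rw [Finset.sum_apply, Finset.sum_eq_single j] at this
    · rw [Matrix.smul_mulVec, hpow] at this
      simp only [Pi.smul_apply, Pi.single_eq_same, smul_eq_mul, mul_one, Pi.zero_apply,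
        mul_eq_zero, Finset.prod_eq_zero_iff] at this
      rcases this with h | ⟨a, _, h⟩
      · exact h
      · exact absurd h (hs _)
    · intro i hi hij
      rw [Matrix.smul_mulVec, hpow]
      have : (σ ^ j) r ≠ (σ ^ i) r := fun h =>
        hij (hinj j (Finset.mem_range.2 hj) i hi h).symm
      simp [Pi.single_apply, this]
    · intro h; exact absurd (Finset.mem_range.2 hj) h
  · exact coeff_eq_zero_of_degree_lt (lt_of_lt_of_le hd (by exact_mod_cast not_lt.1 hj))

theorem sperm_charpoly {W : Type} [Fintype W] [DecidableEq W] (M : Matrix W W ℤ)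
    (ξ : Equiv.Perm W) (len : W → ℕ)
    (hM : ∀ β α, M β α = if β = ξ α then (-1 : ℤ) ^ len α else 0)
    (Rset : Finset W) (hR : ∀ a : W, ∃! r, r ∈ Rset ∧ ξ.SameCycle r a) :
    M.charpoly = ∏ r ∈ Rset,
            ((X : ℤ[X]) ^ (Nat.card {b : W // ξ.SameCycle r b}) -
              C ((-1 : ℤ) ^ (∑ᶠ b ∈ {b : W | ξ.SameCycle r b}, len b))) := by
  choose rep hrep huniq using hR
  let f := Fintype.equivFin W
  have hb : M.BlockTriangular (fun w => f (rep w)) := by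
    intro i j hij
    rw [hM, if_neg]
    rintro rfl
    have : rep j = rep (ξ j) := huniq _ _ ⟨(hrep j).1,
      (hrep j).2.trans (Equiv.Perm.SameCycle.refl ξ j).apply_right⟩
    simp only [this, lt_irrefl] at hij
  rw [hb.charpoly]
  have himg : Finset.univ.image (fun w => f (rep w)) = Rset.image f := by
    ext k
    simp only [Finset.mem_image, Finset.mem_univ, true_and]
    constructor
    · rintro ⟨w, rfl⟩; exact ⟨_, (hrep w).1, rfl⟩
    · rintro ⟨r, hr, rfl⟩
      exact ⟨r, by rw [← huniq r r ⟨hr, Equiv.Perm.SameCycle.refl ξ r⟩]⟩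
  rw [himg, Finset.prod_image (by intro a _ b _ h; exact f.injective h)]
  refine Finset.prod_congr rfl fun r hr => ?_
  have hiff : ∀ a, f (rep a) = f r ↔ ξ.SameCycle r a := by
    intro a
    rw [f.injective.eq_iff]
    constructor
    · rintro rfl; exact (hrep a).2
    · intro h; exact (huniq a r ⟨hr, h⟩).symm
  let σ : Equiv.Perm {a // f (rep a) = f r} := ξ.subtypePerm (fun a => by
    rw [hiff, hiff, Equiv.Perm.sameCycle_apply_right])
  have hσ : ∀ n : ℕ, ∀ a : {a // f (rep a) = f r}, (((σ ^ n) a : {a // f (rep a) = f r}) : W) = (ξ ^ n) a := by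
    intro n a
    simp [σ, Equiv.Perm.subtypePerm_pow]
  rw [cyc_charpoly (M.toSquareBlock (fun w => f (rep w)) (f r)) σ (fun a => (-1) ^ len a.1)
    (fun b => pow_ne_zero _ (by norm_num)) ?_ ⟨r, (hiff r).2 (Equiv.Perm.SameCycle.refl ξ r)⟩ ?_]
  · congr 2
    · rw [← Nat.card_eq_fintype_card]
      exact Nat.card_congr (Equiv.subtypeEquivRight hiff)
    · rw [Finset.prod_pow_eq_pow_sum]
      congr 2
      rw [finsum_mem_eq_finite_toFinset_sum _ (Set.toFinite _)]
      refine (Finset.sum_subtype _ ?_ _).symm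
      intro x
      simp [hiff]
  · intro β α
    simp [Matrix.toSquareBlock_def, hM, σ, Subtype.ext_iff]
  · rintro ⟨b, hb⟩
    obtain ⟨n, hn⟩ := ((hiff b).1 hb).exists_nat_pow_eq
    exact ⟨n, Subtype.ext (by rw [zpow_natCast, hσ]; exact hn)⟩

theorem part_two {V W : Type} [Fintype V] [DecidableEq V] [Fintype W] [DecidableEq W]
    (J : Matrix V W ℤ) (K : Matrix V V ℤ) :
    (X - 1) ^ (Fintype.card W) * ((1 : Matrix V V ℤ) - J * Jᵀ * Kᵀ).charpoly =
    (X - 1) ^ (Fintype.card V) * ((1 : Matrix W W ℤ) - Jᵀ * K * J).charpoly := by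
  have h1 : ((1 : Matrix V V ℤ) - J * Jᵀ * Kᵀ).charpoly =
      ((-J) * (Jᵀ * Kᵀ)).charpoly.comp (X - 1) := by
    have := Matrix.charpoly_sub_scalar ((-J) * (Jᵀ * Kᵀ)) (-1)
    simp only [map_neg, map_one, sub_neg_eq_add, ← sub_eq_add_neg] at this
    rw [← this]
    congr 1
    simp only [Matrix.neg_mul, Matrix.mul_assoc]; abel
  have h2 : ((1 : Matrix W W ℤ) - Jᵀ * K * J).charpoly =
      ((Jᵀ * Kᵀ) * (-J)).charpoly.comp (X - 1) := by
    have := Matrix.charpoly_sub_scalar ((Jᵀ * Kᵀ) * (-J)) (-1)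
    simp only [map_neg, map_one, sub_neg_eq_add, ← sub_eq_add_neg] at this
    rw [← this, ← Matrix.charpoly_transpose]
    congr 1
    simp only [Matrix.mul_neg, Matrix.mul_assoc, Matrix.transpose_sub, Matrix.transpose_mul,
      Matrix.transpose_transpose, Matrix.transpose_one]; abel
  have h3 := congrArg (fun p => p.comp (X - 1)) (Matrix.charpoly_mul_comm' (-J) (Jᵀ * Kᵀ))
  simp only [mul_comp, pow_comp, X_comp] at h3
  rw [h1, h2, h3]

theorem det_right {α : Type} {R : α → α → Prop} (hdet : ∀ a b c, R a b → R a c → b = c) :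
    ∀ (w w' : List α) (a : α), List.IsChain R (a :: w) → List.IsChain R (a :: w') →
      (∀ x, (a :: w).getLast? = some x → ∀ c, ¬ R x c) →
      (∀ x, (a :: w').getLast? = some x → ∀ c, ¬ R x c) → w = w' := by
  intro w
  induction w with
  | nil =>
    intro w' a _ h' hm _
    cases w' with
    | nil => rfl
    | cons b w' =>
      rw [List.isChain_cons_cons] at h'
      exact absurd h'.1 (hm a (by simp) b)
  | cons b w ih =>
    intro w' a h h' hm hm'
    cases w' with
    | nil =>
      rw [List.isChain_cons_cons] at h
      exact absurd h.1 (hm' a (by simp) b)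
    | cons b' w' =>
      rw [List.isChain_cons_cons] at h h'
      obtain rfl := hdet _ _ _ h.1 h'.1
      rw [List.getLast?_cons_cons] at hm hm'
      rw [ih w' b h.2 h'.2 hm hm']

theorem det_left {α : Type} {R : α → α → Prop} (hdet : ∀ a b c, R b a → R c a → b = c)
    (w w' : List α) (a : α) (h : List.IsChain R (w ++ [a])) (h' : List.IsChain R (w' ++ [a]))
      (hm : ∀ x, (w ++ [a]).head? = some x → ∀ c, ¬ R c x)
      (hm' : ∀ x, (w' ++ [a]).head? = some x → ∀ c, ¬ R c x) : w = w' := by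
  have := det_right (R := fun x y => R y x) (fun a b c => hdet a b c) w.reverse w'.reverse a
    (by rw [← List.isChain_reverse]; simpa using h) (by rw [← List.isChain_reverse]; simpa using h')
    (by
      intro x hx
      apply hm x
      rw [← List.getLast?_reverse]; simpa using hx)
    (by
      intro x hx
      apply hm' x
      rw [← List.getLast?_reverse]; simpa using hx)
  exact List.reverse_injective this

theorem ext_right {α : Type} {R : α → α → Prop} {m : ℕ}
    (hb : ∀ l, List.IsChain R l → l.length < m) :
    ∀ (n : ℕ) (l : List α), List.IsChain R l → m ≤ l.length + n →
      ∃ w, List.IsChain R (l ++ w) ∧ ∀ x, (l ++ w).getLast? = some x → ∀ c, ¬ R x c := by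
  intro n
  induction n with
  | zero => intro l hl h; exact absurd (hb l hl) (by omega)
  | succ n ih =>
    intro l hl h
    by_cases hc : ∃ x c, l.getLast? = some x ∧ R x c
    · obtain ⟨x, c, hx, hR⟩ := hc
      obtain ⟨w, hw⟩ := ih (l ++ [c]) (by
        rw [List.isChain_append]
        refine ⟨hl, List.isChain_singleton _, ?_⟩
        intro y hy z hz
        simp only [Option.mem_def] at hy hz
        rw [hx] at hy
        simp at hy hz
        subst hy hz
        exact hR) (by simp; omega)
      exact ⟨c :: w, by simpa using hw⟩
    · push Not at hc
      refine ⟨[], by simpa using hl, ?_⟩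
      intro x hx c
      exact hc x c (by simpa using hx)

theorem ext_left {α : Type} {R : α → α → Prop} {m : ℕ}
    (hb : ∀ l, List.IsChain R l → l.length < m) (l : List α) (hl : List.IsChain R l) :
      ∃ w, List.IsChain R (w ++ l) ∧ ∀ x, (w ++ l).head? = some x → ∀ c, ¬ R c x := by
  obtain ⟨w, hw, hm⟩ := ext_right (R := fun x y => R y x) (m := m)
    (fun l hl => by
      rw [← List.isChain_reverse] at hl
      simpa using hb _ hl) m l.reverse (by rw [← List.isChain_reverse]; simpa using hl)
    (by omega)
  refine ⟨w.reverse, ?_, ?_⟩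
  · rw [← List.isChain_reverse] at hw; simpa using hw
  · intro x hx
    apply hm x
    rw [← List.head?_reverse]
    simpa using hx

namespace BQuiv

variable {V A : Type} {Q : BQuiv V A}

/-- `ab` is a permitted path of length two. -/
def RR (Q : BQuiv V A) (a b : A) : Prop := Q.src a = Q.tgt b ∧ ¬ Q.rel a b

theorem rr_chain_iff (l : List A) : l.IsChain (RR Q) ↔
    l.IsChain (fun a b => Q.src a = Q.tgt b) ∧ l.IsChain (fun a b => ¬ Q.rel a b) := by
  induction l with
  | nil => simp
  | cons a l ih =>
    cases l with
    | nil => simp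
    | cons b l => rw [List.isChain_cons_cons, List.isChain_cons_cons, List.isChain_cons_cons, ih, RR]; tauto

theorem IsGentle.bound (hQ : Q.IsGentle) : ∃ m, ∀ l : List A, l.IsChain (RR Q) → l.length < m := by
  obtain ⟨m, _, hm⟩ := hQ.admissible
  refine ⟨m, fun l hl => ?_⟩
  by_contra hlt
  have h := (rr_chain_iff _).1 (hl.take m)
  exact hm (l.take m) (by simp; omega) h.1 h.2

theorem IsGentle.rr_det_right (hQ : Q.IsGentle) (a b c : A) (h : RR Q a b) (h' : RR Q a c) :
    b = c := hQ.unique_nonrel_pre a b c h.1 h'.1 h.2 h'.2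

theorem IsGentle.rr_det_left (hQ : Q.IsGentle) (a b c : A) (h : RR Q b a) (h' : RR Q c a) :
    b = c := hQ.unique_nonrel_post a b c h.1 h'.1 h.2 h'.2

theorem PThread.chain (t : PThread Q) : t.1.arrows.IsChain (RR Q) := by
  rw [rr_chain_iff]
  refine ⟨t.1.chain, ?_⟩
  rcases t.2 with h | h
  · exact h.2.1
  · rw [h.1]; simp

theorem PThread.headmax (t : PThread Q) (b : A) (hb : t.1.arrows.head? = some b) (a : A) :
    ¬ RR Q a b := by
  rcases t.2 with h | h
  · exact fun hR => hR.2 (h.2.2.1 a b hb hR.1)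
  · rw [h.1] at hb; simp at hb

theorem PThread.lastmax (t : PThread Q) (b : A) (hb : t.1.arrows.getLast? = some b) (a : A) :
    ¬ RR Q b a := by
  rcases t.2 with h | h
  · exact fun hR => hR.2 (h.2.2.2 b a hb hR.1)
  · rw [h.1] at hb; simp at hb

theorem exists_thread (l : List A) (h0 : l ≠ []) (hl : l.IsChain (RR Q))
    (h1 : ∀ b, l.head? = some b → ∀ a, ¬ RR Q a b)
    (h2 : ∀ b, l.getLast? = some b → ∀ a, ¬ RR Q b a) : ∃ t : PThread Q, t.1.arrows = l := by
  have hc := (rr_chain_iff _).1 hl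
  refine ⟨⟨⟨Q.src (l.getLast h0), l, hc.1, ?_⟩, Or.inl ⟨h0, hc.2, ?_, ?_⟩⟩, rfl⟩
  · intro a ha
    rw [List.getLast?_eq_getLast_of_ne_nil h0] at ha
    simp at ha
    rw [ha]
  · intro a b hb hs
    by_contra hr
    exact h1 b hb a ⟨hs, hr⟩
  · intro a b hb hs
    by_contra hr
    exact h2 a hb b ⟨hs, hr⟩

theorem path_ext (p q : Path Q) (h : p.arrows = q.arrows) (hb : p.base = q.base) : p = q := by
  cases p; cases q; simp_all

theorem path_ext' (p q : Path Q) (h : p.arrows = q.arrows) (h0 : p.arrows ≠ []) : p = q := by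
  refine path_ext p q h ?_
  have h1 := p.base_eq _ (List.getLast?_eq_getLast_of_ne_nil h0)
  have h2 := q.base_eq _ (by rw [← h]; exact (List.getLast?_eq_getLast_of_ne_nil h0))
  rw [← h1, ← h2]

theorem split_at {l : List A} {k : ℕ} {a : A} (h : l[k]? = some a) :
    l = l.take k ++ a :: l.drop (k + 1) := by
  obtain ⟨hk, rfl⟩ := List.getElem?_eq_some_iff.1 h
  simp

theorem arrow_unique (hQ : Q.IsGentle) (t t' : PThread Q) (k k' : ℕ) (a : A)
    (h : t.1.arrows[k]? = some a) (h' : t'.1.arrows[k']? = some a) : t = t' ∧ k = k' := by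
  have e := split_at h
  have e' := split_at h'
  have hk := (List.getElem?_eq_some_iff.1 h).1
  have hk' := (List.getElem?_eq_some_iff.1 h').1
  have c := t.chain
  have c' := t'.chain
  have m := t.headmax
  have m' := t'.headmax
  have n := t.lastmax
  have n' := t'.lastmax
  rw [e] at c m n
  rw [e'] at c' m' n'
  rw [List.isChain_split] at c c'
  have r : t.1.arrows.drop (k + 1) = t'.1.arrows.drop (k' + 1) := by
    refine det_right (hQ.rr_det_right) _ _ a c.2 c'.2 ?_ ?_
    · intro x hx; exact n x (by simpa using hx)
    · intro x hx; exact n' x (by simpa using hx)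
  have l : t.1.arrows.take k = t'.1.arrows.take k' := by
    refine det_left (hQ.rr_det_left) _ _ a c.1 c'.1 ?_ ?_
    · intro x hx; exact m x (by simpa using hx)
    · intro x hx; exact m' x (by simpa using hx)
  constructor
  · apply Subtype.ext
    apply path_ext'
    · rw [e, e', l, r]
    · intro h0; rw [h0] at hk; simp at hk
  · have := congrArg List.length l
    simp at this
    omega

theorem vertexAt_eq (p : Path Q) (k : ℕ) : p.vertexAt k = p.arrows[k]?.elim p.base Q.tgt := by
  rw [Path.vertexAt, List.head?_drop]

theorem vertexAt_tgt (p : Path Q) (k : ℕ) (a : A) (h : p.arrows[k]? = some a) :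
    p.vertexAt k = Q.tgt a := by
  rw [vertexAt_eq, h]; rfl

theorem vertexAt_src (p : Path Q) (k : ℕ) (a : A) (h : p.arrows[k]? = some a) :
    p.vertexAt (k + 1) = Q.src a := by
  obtain ⟨hk, ha⟩ := List.getElem?_eq_some_iff.1 h
  rw [vertexAt_eq]
  by_cases hk' : k + 1 < p.arrows.length
  · rw [List.getElem?_eq_getElem hk']
    have := List.isChain_iff_getElem.1 p.chain k hk'
    rw [ha] at this
    exact this.symm
  · rw [List.getElem?_eq_none (by omega)]
    have := p.base_eq a (by
      rw [List.getLast?_eq_getElem?, ← h]; congr 1; omega)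
    exact this.symm

theorem psplit_ext (h h' : PSplit Q) (h1 : h.thread = h'.thread) (h2 : h.idx = h'.idx) : h = h' :=
  Subtype.ext (Prod.ext h1 h2)

theorem idx_le (h : PSplit Q) : h.idx ≤ h.thread.1.arrows.length := h.2

/-- The arrow to the left of a split. -/
def hL (h : PSplit Q) : Option A := if h.idx = 0 then none else h.thread.1.arrows[h.idx - 1]?

/-- The arrow to the right of a split. -/
def hR (h : PSplit Q) : Option A := h.thread.1.arrows[h.idx]?

/-- The local types of half-edges at a vertex. -/
def Valid (Q : BQuiv V A) (v : V) : Option A × Option A → Prop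
  | (some a, some b) => Q.src a = v ∧ Q.tgt b = v ∧ ¬ Q.rel a b
  | (none, some b) => Q.tgt b = v ∧ ∀ a, Q.src a = v → Q.rel a b
  | (some a, none) => Q.src a = v ∧ ∀ b, Q.tgt b = v → Q.rel a b
  | (none, none) => Q.deg v = 1 ∨ (Q.deg v = 2 ∧
    ∃ α β, Q.src α = v ∧ Q.tgt β = v ∧ ¬ Q.rel α β)

theorem center_eq (h : PSplit Q) : h.center = h.thread.1.vertexAt h.idx := rfl

theorem hL_some {h : PSplit Q} {a : A} (ha : hL h = some a) :
    ∃ k, h.idx = k + 1 ∧ h.thread.1.arrows[k]? = some a := by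
  unfold hL at ha
  split_ifs at ha with h0
  exact ⟨h.idx - 1, by omega, ha⟩

theorem hL_none {h : PSplit Q} (ha : hL h = none) : h.idx = 0 := by
  unfold hL at ha
  split_ifs at ha with h0
  · exact h0
  · have := idx_le h
    rw [List.getElem?_eq_none_iff] at ha
    omega

theorem hR_none {h : PSplit Q} (ha : hR h = none) : h.idx = h.thread.1.arrows.length := by
  unfold hR at ha
  have := idx_le h
  rw [List.getElem?_eq_none_iff] at ha
  omega

theorem center_src {h : PSplit Q} {a : A} (ha : hL h = some a) : h.center = Q.src a := by
  obtain ⟨k, hk, ha⟩ := hL_some ha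
  rw [center_eq, hk]
  exact vertexAt_src _ _ _ ha

theorem center_tgt {h : PSplit Q} {a : A} (ha : hR h = some a) : h.center = Q.tgt a :=
  vertexAt_tgt _ _ _ ha

theorem valid_of (h : PSplit Q) : Valid Q h.center (hL h, hR h) := by
  cases hl : hL h with
  | none =>
    have h0 := hL_none hl
    cases hr : hR h with
    | none =>
      have h1 := hR_none hr
      have hn : h.thread.1.arrows = [] := by rw [← List.length_eq_zero_iff]; omega
      have hc : h.center = h.thread.1.base := by
        rw [center_eq, vertexAt_eq, hn]; simp
      rw [hc]
      rcases h.thread.2 with h' | h'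
      · exact absurd hn h'.1
      · exact h'.2
    | some b =>
      refine ⟨(center_tgt hr).symm, ?_⟩
      intro a ha
      by_contra hr'
      refine h.thread.headmax b ?_ a ⟨by rw [ha, center_tgt hr], hr'⟩
      unfold hR at hr
      rw [h0] at hr
      rw [List.head?_eq_getElem?]; exact hr
  | some a =>
    cases hr : hR h with
    | none =>
      refine ⟨(center_src hl).symm, ?_⟩
      intro b hb
      by_contra hr'
      refine h.thread.lastmax a ?_ b ⟨by rw [hb, center_src hl], hr'⟩
      have := hR_none hr
      obtain ⟨k, hk, hl⟩ := hL_some hl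
      rw [List.getLast?_eq_getElem?, ← hl]; congr 1; omega
    | some b =>
      refine ⟨(center_src hl).symm, (center_tgt hr).symm, ?_⟩
      obtain ⟨k, hk, hl⟩ := hL_some hl
      unfold hR at hr
      rw [hk] at hr
      obtain ⟨h1, h2⟩ := List.getElem?_eq_some_iff.1 hr
      obtain ⟨h3, h4⟩ := List.getElem?_eq_some_iff.1 hl
      have := List.isChain_iff_getElem.1 h.thread.chain k h1
      rw [h2, h4] at this
      exact this.2

theorem split_inj (hQ : Q.IsGentle) (h h' : PSplit Q) (hc : h.center = h'.center)
    (hl : hL h = hL h') (hr : hR h = hR h') : h = h' := by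
  cases hr1 : hR h with
  | some b =>
    have hr2 := hr1
    rw [hr] at hr2
    obtain ⟨h1, h2⟩ := arrow_unique hQ _ _ _ _ _ hr1 hr2
    exact psplit_ext _ _ h1 h2
  | none =>
    have hr2 := hr1
    rw [hr] at hr2
    cases hl1 : hL h with
    | some a =>
      have hl2 := hl1
      rw [hl] at hl2
      obtain ⟨k, hk, hl1⟩ := hL_some hl1
      obtain ⟨k', hk', hl2⟩ := hL_some hl2
      obtain ⟨h1, h2⟩ := arrow_unique hQ _ _ _ _ _ hl1 hl2
      exact psplit_ext _ _ h1 (by omega)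
    | none =>
      have hl2 := hl1
      rw [hl] at hl2
      have a1 := hL_none hl1
      have a2 := hL_none hl2
      have a3 := hR_none hr1
      have a4 := hR_none hr2
      have hn : h.thread.1.arrows = [] := by rw [← List.length_eq_zero_iff]; omega
      have hn' : h'.thread.1.arrows = [] := by rw [← List.length_eq_zero_iff]; omega
      rw [center_eq, center_eq, vertexAt_eq, vertexAt_eq, hn, hn'] at hc
      refine psplit_ext _ _ (Subtype.ext (path_ext _ _ (by rw [hn, hn']) ?_)) (by omega)
      simpa using hc

theorem exists_of_valid (hQ : Q.IsGentle) (v : V) (x y : Option A) (hv : Valid Q v (x, y)) :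
    ∃ h : PSplit Q, h.center = v ∧ hL h = x ∧ hR h = y := by
  obtain ⟨m, hb⟩ := hQ.bound
  cases x with
  | none =>
    cases y with
    | none =>
      refine ⟨⟨(⟨⟨v, [], List.isChain_nil, by simp⟩, Or.inr ⟨rfl, hv⟩⟩, 0), by simp⟩, ?_, ?_, ?_⟩
      · rfl
      · rfl
      · rfl
    | some b =>
      obtain ⟨w, hw, hm⟩ := ext_right hb m [b] (List.isChain_singleton _) (by omega)
      obtain ⟨t, ht⟩ := exists_thread ([b] ++ w) (by simp) hw (by
        intro b' hb' a hR
        simp at hb'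
        subst hb'
        exact hR.2 (hv.2 a (by rw [hR.1, hv.1]))) hm
      have hr : hR (⟨(t, 0), by simp⟩ : PSplit Q) = some b := by
        show t.1.arrows[0]? = _
        rw [ht]; simp
      exact ⟨⟨(t, 0), by simp⟩, by rw [center_tgt hr, hv.1], rfl, hr⟩
  | some a =>
    cases y with
    | none =>
      obtain ⟨w, hw, hm⟩ := ext_left hb [a] (List.isChain_singleton _)
      obtain ⟨t, ht⟩ := exists_thread (w ++ [a]) (by simp) hw hm (by
        intro b' hb' b hR
        simp at hb'
        subst hb'
        exact hR.2 (hv.2 b (by rw [← hR.1, hv.1])))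
      have hlen : t.1.arrows.length = w.length + 1 := by rw [ht]; simp
      have hl : hL (⟨(t, w.length + 1), by rw [hlen]⟩ : PSplit Q) = some a := by
        show (if w.length + 1 = 0 then none else t.1.arrows[w.length + 1 - 1]?) = _
        rw [ht]; simp
      refine ⟨⟨(t, w.length + 1), by rw [hlen]⟩, by rw [center_src hl, hv.1], hl, ?_⟩
      show t.1.arrows[w.length + 1]? = _
      rw [ht]; simp
    | some b =>
      obtain ⟨w, hw, hm⟩ := ext_right hb m [a, b]
        (by rw [List.isChain_pair]; exact ⟨by rw [hv.1, hv.2.1], hv.2.2⟩) (by omega)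
      obtain ⟨u, hu, hm'⟩ := ext_left hb _ hw
      obtain ⟨t, ht⟩ := exists_thread (u ++ ([a, b] ++ w)) (by simp) hu hm' (by
        intro b' hb'
        apply hm b'
        rw [List.getLast?_append] at hb'
        simpa using hb')
      have hlen : u.length + 1 ≤ t.1.arrows.length := by rw [ht]; simp
      have hl : hL (⟨(t, u.length + 1), hlen⟩ : PSplit Q) = some a := by
        show (if u.length + 1 = 0 then none else t.1.arrows[u.length + 1 - 1]?) = _
        rw [ht]; simp
      refine ⟨⟨(t, u.length + 1), hlen⟩, by rw [center_src hl, hv.1], hl, ?_⟩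
      show t.1.arrows[u.length + 1]? = _
      rw [ht]; simp

theorem deg_pos (hQ : Q.IsGentle) (v : V) : ∃ a, Q.src a = v ∨ Q.tgt a = v := by
  obtain ⟨a⟩ := hQ.has_arrow
  rcases Relation.ReflTransGen.cases_head (hQ.connected v (Q.src a)) with h | ⟨c, ⟨b, hb⟩, _⟩
  · exact ⟨a, Or.inl h.symm⟩
  · exact ⟨b, by tauto⟩

theorem card_cases [Finite A] (f : A → V) (v : V) (h : Nat.card {a : A // f a = v} ≤ 2) :
    (Nat.card {a : A // f a = v} = 0 ∧ ∀ a, f a ≠ v) ∨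
    (Nat.card {a : A // f a = v} = 1 ∧ ∃ x, ∀ a, f a = v ↔ a = x) ∨
    (Nat.card {a : A // f a = v} = 2 ∧ ∃ x y, x ≠ y ∧ ∀ a, f a = v ↔ (a = x ∨ a = y)) := by
  have e : Nat.card {a : A // f a = v} = Set.ncard {a : A | f a = v} := rfl
  rw [e] at h ⊢
  have h3 : Set.ncard {a : A | f a = v} = 0 ∨ Set.ncard {a : A | f a = v} = 1 ∨
    Set.ncard {a : A | f a = v} = 2 := by omega
  rcases h3 with h3 | h3 | h3
  · refine Or.inl ⟨h3, ?_⟩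
    rw [Set.ncard_eq_zero] at h3
    intro a ha
    have : a ∈ {a : A | f a = v} := ha
    rw [h3] at this
    exact this
  · refine Or.inr (Or.inl ⟨h3, ?_⟩)
    obtain ⟨x, hx⟩ := Set.ncard_eq_one.1 h3
    exact ⟨x, fun a => by simpa using Set.ext_iff.1 hx a⟩
  · refine Or.inr (Or.inr ⟨h3, ?_⟩)
    obtain ⟨x, y, hxy, hx⟩ := Set.ncard_eq_two.1 h3
    exact ⟨x, y, hxy, fun a => by simpa using Set.ext_iff.1 hx a⟩

theorem two_valid [Finite A] (hQ : Q.IsGentle) (v : V) :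
    ∃ p q : Option A × Option A, p ≠ q ∧ ∀ z, Valid Q v z ↔ (z = p ∨ z = q) := by
  obtain ⟨a0, ha0⟩ := deg_pos hQ v
  have up := hQ.unique_rel_post
  have ur := hQ.unique_rel_pre
  have vp : ∀ b a a', Q.src a = v → Q.src a' = v → Q.tgt b = v →
    ¬ Q.rel a b → ¬ Q.rel a' b → a = a' := fun b a a' h1 h2 h3 =>
      hQ.unique_nonrel_post b a a' (by rw [h1, h3]) (by rw [h2, h3])
  have vr : ∀ b c c', Q.src b = v → Q.tgt c = v → Q.tgt c' = v →
    ¬ Q.rel b c → ¬ Q.rel b c' → c = c' := fun b a a' h1 h2 h3 =>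
      hQ.unique_nonrel_pre b a a' (by rw [h1, h2]) (by rw [h1, h3])
  have hdeg : Q.deg v = Nat.card {a : A // Q.src a = v} + Nat.card {a : A // Q.tgt a = v} := rfl
  have key : ∀ p q : Option A × Option A, p ≠ q → Valid Q v p → Valid Q v q →
      (∀ z, Valid Q v z → (z = p ∨ z = q)) →
      ∃ p q : Option A × Option A, p ≠ q ∧ ∀ z, Valid Q v z ↔ (z = p ∨ z = q) := by
    intro p q hpq hp hq hz
    refine ⟨p, q, hpq, fun z => ⟨hz z, ?_⟩⟩
    rintro (rfl | rfl) <;> assumption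
  rcases card_cases Q.src v (hQ.out_le v) with ⟨ho, hs⟩ | ⟨ho, a1, hs⟩ | ⟨ho, a1, a2, hne, hs⟩ <;>
  rcases card_cases Q.tgt v (hQ.in_le v) with ⟨hi, ht⟩ | ⟨hi, b1, ht⟩ | ⟨hi, b1, b2, hne', ht⟩ <;>
  rw [ho, hi] at hdeg
  · exfalso; rcases ha0 with h | h
    · exact hs _ h
    · exact ht _ h
  · have t1 : Q.tgt b1 = v := (ht b1).2 rfl
    clear ha0 a0
    refine key (none, some b1) (none, none) (by simp) ?_ ?_ ?_
    · clear key; simp only [Valid]; grind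
    · clear key; simp only [Valid]; grind
    · clear key; rintro ⟨_ | a, _ | b⟩ <;> simp only [Valid] <;> grind
  · have t1 : Q.tgt b1 = v := (ht b1).2 (Or.inl rfl)
    have t2 : Q.tgt b2 = v := (ht b2).2 (Or.inr rfl)
    clear ha0 a0
    refine key (none, some b1) (none, some b2) (by simpa using hne') ?_ ?_ ?_
    · clear key; simp only [Valid]; grind
    · clear key; simp only [Valid]; grind
    · clear key; rintro ⟨_ | a, _ | b⟩ <;> simp only [Valid] <;> grind
  · have s1 : Q.src a1 = v := (hs a1).2 rfl
    clear ha0 a0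
    refine key (some a1, none) (none, none) (by simp) ?_ ?_ ?_
    · clear key; simp only [Valid]; grind
    · clear key; simp only [Valid]; grind
    · clear key; rintro ⟨_ | a, _ | b⟩ <;> simp only [Valid] <;> grind
  · have s1 : Q.src a1 = v := (hs a1).2 rfl
    have t1 : Q.tgt b1 = v := (ht b1).2 rfl
    clear ha0 a0
    by_cases hr : Q.rel a1 b1
    · refine key (some a1, none) (none, some b1) (by simp) ?_ ?_ ?_
      · clear key; simp only [Valid]; grind
      · clear key; simp only [Valid]; grind
      · clear key; rintro ⟨_ | a, _ | b⟩ <;> simp only [Valid] <;> grind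
    · refine key (some a1, some b1) (none, none) (by simp) ?_ ?_ ?_
      · clear key; simp only [Valid]; grind
      · simp only [Valid]
        right
        exact ⟨hdeg, a1, b1, (hs a1).2 rfl, (ht b1).2 rfl, hr⟩
      · clear key; rintro ⟨_ | a, _ | b⟩ <;> simp only [Valid] <;> grind
  · have s1 : Q.src a1 = v := (hs a1).2 rfl
    have t1 : Q.tgt b1 = v := (ht b1).2 (Or.inl rfl)
    have t2 : Q.tgt b2 = v := (ht b2).2 (Or.inr rfl)
    clear ha0 a0
    by_cases hr : Q.rel a1 b1
    · refine key (some a1, some b2) (none, some b1) (by simp) ?_ ?_ ?_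
      · clear key; simp only [Valid]; grind
      · clear key; simp only [Valid]; grind
      · clear key; rintro ⟨_ | a, _ | b⟩ <;> simp only [Valid] <;> grind
    · refine key (some a1, some b1) (none, some b2) (by simp) ?_ ?_ ?_
      · clear key; simp only [Valid]; grind
      · clear key; simp only [Valid]; grind
      · clear key; rintro ⟨_ | a, _ | b⟩ <;> simp only [Valid] <;> grind
  · have s1 : Q.src a1 = v := (hs a1).2 (Or.inl rfl)
    have s2 : Q.src a2 = v := (hs a2).2 (Or.inr rfl)
    clear ha0 a0
    refine key (some a1, none) (some a2, none) (by simpa using hne) ?_ ?_ ?_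
    · clear key; simp only [Valid]; grind
    · clear key; simp only [Valid]; grind
    · clear key; rintro ⟨_ | a, _ | b⟩ <;> simp only [Valid] <;> grind
  · have s1 : Q.src a1 = v := (hs a1).2 (Or.inl rfl)
    have s2 : Q.src a2 = v := (hs a2).2 (Or.inr rfl)
    have t1 : Q.tgt b1 = v := (ht b1).2 rfl
    clear ha0 a0
    by_cases hr : Q.rel a1 b1
    · refine key (some a2, some b1) (some a1, none) (by simp) ?_ ?_ ?_
      · clear key; simp only [Valid]; grind
      · clear key; simp only [Valid]; grind
      · clear key; rintro ⟨_ | a, _ | b⟩ <;> simp only [Valid] <;> grind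
    · refine key (some a1, some b1) (some a2, none) (by simp) ?_ ?_ ?_
      · clear key; simp only [Valid]; grind
      · clear key; simp only [Valid]; grind
      · clear key; rintro ⟨_ | a, _ | b⟩ <;> simp only [Valid] <;> grind
  · have s1 : Q.src a1 = v := (hs a1).2 (Or.inl rfl)
    have s2 : Q.src a2 = v := (hs a2).2 (Or.inr rfl)
    have t1 : Q.tgt b1 = v := (ht b1).2 (Or.inl rfl)
    have t2 : Q.tgt b2 = v := (ht b2).2 (Or.inr rfl)
    clear ha0 a0
    by_cases hr : Q.rel a1 b1
    · refine key (some a1, some b2) (some a2, some b1) (by simp [hne]) ?_ ?_ ?_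
      · clear key; simp only [Valid]; grind
      · clear key; simp only [Valid]; grind
      · clear key; rintro ⟨_ | a, _ | b⟩ <;> simp only [Valid] <;> grind
    · refine key (some a1, some b1) (some a2, some b2) (by simp [hne]) ?_ ?_ ?_
      · clear key; simp only [Valid]; grind
      · clear key; simp only [Valid]; grind
      · clear key; rintro ⟨_ | a, _ | b⟩ <;> simp only [Valid] <;> grind

theorem two_splits [Finite A] (hQ : Q.IsGentle) (v : V) :
    ∃ p q : PSplit Q, p ≠ q ∧ ∀ h : PSplit Q, h.center = v ↔ (h = p ∨ h = q) := by
  obtain ⟨⟨p1, p2⟩, ⟨q1, q2⟩, hpq, H⟩ := two_valid hQ v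
  obtain ⟨p, hp, hpl, hpr⟩ := exists_of_valid hQ v p1 p2 ((H _).2 (Or.inl rfl))
  obtain ⟨q, hq, hql, hqr⟩ := exists_of_valid hQ v q1 q2 ((H _).2 (Or.inr rfl))
  refine ⟨p, q, ?_, fun h => ⟨fun hh => ?_, ?_⟩⟩
  · rintro rfl
    exact hpq (by rw [← hpl, ← hql, ← hpr, ← hqr])
  · have hv := valid_of h
    rw [hh, H, Prod.mk.injEq, Prod.mk.injEq] at hv
    rcases hv with ⟨h1, h2⟩ | ⟨h1, h2⟩
    · exact Or.inl (split_inj hQ _ _ (by rw [hh, hp]) (by rw [h1, hpl]) (by rw [h2, hpr]))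
    · exact Or.inr (split_inj hQ _ _ (by rw [hh, hq]) (by rw [h1, hql]) (by rw [h2, hqr]))
  · rintro (rfl | rfl) <;> assumption

/-- Comparable pairs of splits. -/
def Lt (h h' : PSplit Q) : Prop := h.thread = h'.thread ∧ h.idx < h'.idx

/-- The path between two cut positions. -/
def between (p : Path Q) (a b : ℕ) (hab : a < b) (hb : b ≤ p.arrows.length) : Path Q where
  base := p.vertexAt b
  arrows := (p.arrows.take b).drop a
  chain := List.IsChain.drop (List.IsChain.take p.chain b) a
  base_eq := by
    intro x hx
    obtain ⟨b, rfl⟩ : ∃ c, b = c + 1 := ⟨b - 1, by omega⟩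
    symm
    apply vertexAt_src
    rw [List.getLast?_eq_getElem?, List.getElem?_drop, List.getElem?_take] at hx
    simp only [List.length_drop, List.length_take] at hx
    split_ifs at hx
    rw [← hx]
    congr 1
    omega

theorem cartan_card [Finite A] (hQ : Q.IsGentle) [Finite (PSplit Q)] (i j : V) :
    Nat.card {p : Path Q // p.Permitted ∧ p.base = j ∧ p.tgtV = i} =
    (if i = j then 1 else 0) +
    Nat.card {x : PSplit Q × PSplit Q // Lt x.1 x.2 ∧ x.1.center = i ∧ x.2.center = j} := by
  have hle : ∀ x : PSplit Q × PSplit Q, Lt x.1 x.2 → x.2.idx ≤ x.1.thread.1.arrows.length := by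
    intro x hx; rw [hx.1]; exact idx_le _
  have hperm : ∀ x : PSplit Q × PSplit Q, ∀ hx : Lt x.1 x.2,
      (between x.1.thread.1 x.1.idx x.2.idx hx.2 (hle x hx)).Permitted := by
    intro x hx
    have := ((rr_chain_iff _).1 x.1.thread.chain).2
    exact List.IsChain.drop (List.IsChain.take this _) _
  have hhead : ∀ x : PSplit Q × PSplit Q, ∀ hx : Lt x.1 x.2,
      (between x.1.thread.1 x.1.idx x.2.idx hx.2 (hle x hx)).arrows.head? =
        x.1.thread.1.arrows[x.1.idx]? := by
    intro x hx
    simp only [between, List.head?_drop, List.getElem?_take, if_pos hx.2]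
  have hlen : ∀ x : PSplit Q × PSplit Q, ∀ hx : Lt x.1 x.2,
      (between x.1.thread.1 x.1.idx x.2.idx hx.2 (hle x hx)).arrows.length =
        x.2.idx - x.1.idx := by
    intro x hx
    have := hle x hx
    simp only [between, List.length_drop, List.length_take]
    omega
  have hbase : ∀ x : PSplit Q × PSplit Q, ∀ hx : Lt x.1 x.2,
      (between x.1.thread.1 x.1.idx x.2.idx hx.2 (hle x hx)).base = x.2.center := by
    intro x hx
    show x.1.thread.1.vertexAt x.2.idx = x.2.thread.1.vertexAt x.2.idx
    rw [hx.1]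
  have htgt : ∀ x : PSplit Q × PSplit Q, ∀ hx : Lt x.1 x.2,
      (between x.1.thread.1 x.1.idx x.2.idx hx.2 (hle x hx)).tgtV = x.1.center := by
    intro x hx
    rw [center_eq, vertexAt_eq, Path.tgtV, hhead x hx]
    have h1 := hle x hx
    have h2 := hx.2
    rw [List.getElem?_eq_getElem (by omega)]
    rfl
  let F : {_u : Unit // i = j} ⊕
      {x : PSplit Q × PSplit Q // Lt x.1 x.2 ∧ x.1.center = i ∧ x.2.center = j} →
      {p : Path Q // p.Permitted ∧ p.base = j ∧ p.tgtV = i} := fun s => match s with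
    | Sum.inl u => ⟨⟨j, [], List.isChain_nil, by simp⟩, List.isChain_nil, rfl, u.2.symm⟩
    | Sum.inr x => ⟨between x.1.1.thread.1 x.1.1.idx x.1.2.idx x.2.1.2 (hle x.1 x.2.1),
        hperm x.1 x.2.1, (hbase x.1 x.2.1).trans x.2.2.2, (htgt x.1 x.2.1).trans x.2.2.1⟩
  have hF : Function.Bijective F := by
    constructor
    · rintro (u | x) (u' | x') h
      · congr 1
        exact Subtype.ext rfl
      · exfalso
        have h := congrArg (fun p => p.1.arrows.length) h
        have h1 := hlen x'.1 x'.2.1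
        have h2 := x'.2.1.2
        simp only [F, List.length_nil] at h
        omega
      · exfalso
        have h := congrArg (fun p => p.1.arrows.length) h
        have h1 := hlen x.1 x.2.1
        have h2 := x.2.1.2
        simp only [F, List.length_nil] at h
        omega
      · have h1 := congrArg (fun p => p.1.arrows.length) h
        have h2 := congrArg (fun p => p.1.arrows.head?) h
        simp only [F] at h1 h2
        rw [hlen x.1 x.2.1, hlen x'.1 x'.2.1] at h1
        rw [hhead x.1 x.2.1, hhead x'.1 x'.2.1] at h2
        have h3 := hle x.1 x.2.1
        have h4 := x.2.1.2
        have h4' := x'.2.1.2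
        have h5 := List.getElem?_eq_getElem (l := x.1.1.thread.1.arrows) (i := x.1.1.idx) (by omega)
        obtain ⟨e1, e2⟩ := arrow_unique hQ _ _ _ _ _ h5 (h2 ▸ h5)
        have g1 : x.1.1 = x'.1.1 := psplit_ext _ _ e1 e2
        have g2 : x.1.2 = x'.1.2 := psplit_ext _ _ (by rw [← x.2.1.1, ← x'.2.1.1, e1]) (by omega)
        congr 1
        exact Subtype.ext (Prod.ext g1 g2)
    · rintro ⟨p, hp, hj, hi⟩
      by_cases h0 : p.arrows = []
      · have hij : i = j := by
          rw [← hj, ← hi, Path.tgtV, h0]; rfl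
        refine ⟨Sum.inl ⟨(), hij⟩, ?_⟩
        apply Subtype.ext
        exact path_ext _ _ h0.symm hj.symm
      · obtain ⟨m, hb⟩ := hQ.bound
        obtain ⟨w, hw, hm⟩ := ext_right hb m p.arrows ((rr_chain_iff _).2 ⟨p.chain, hp⟩) (by omega)
        obtain ⟨u, hu, hm'⟩ := ext_left hb _ hw
        obtain ⟨t, ht⟩ := exists_thread (u ++ (p.arrows ++ w)) (by simp [h0]) hu hm' (by
          intro b' hb'
          apply hm b'
          rw [List.getLast?_append_of_ne_nil _ (by simp [h0])] at hb'
          exact hb')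
        have hl0 : 0 < p.arrows.length := List.length_pos_iff.2 h0
        let x : PSplit Q := ⟨(t, u.length), by rw [ht]; simp⟩
        let y : PSplit Q := ⟨(t, u.length + p.arrows.length), by rw [ht]; simp⟩
        have hxy : Lt x y := ⟨rfl, by show u.length < u.length + p.arrows.length; omega⟩
        have hpa : p = between t.1 u.length (u.length + p.arrows.length) hxy.2 (hle (x, y) hxy) := by
          apply path_ext' _ _ _ h0
          simp only [between, ht]
          rw [List.take_length_add_append]
          simp
        refine ⟨Sum.inr ⟨(x, y), hxy, ?_, ?_⟩, ?_⟩
        · rw [← hi]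
          exact (htgt (x, y) hxy).symm.trans (congrArg Path.tgtV hpa.symm)
        · rw [← hj]
          exact (hbase (x, y) hxy).symm.trans (congrArg Path.base hpa.symm)
        · exact Subtype.ext hpa.symm
  rw [← Nat.card_congr (Equiv.ofBijective F hF), Nat.card_sum]
  congr 1
  split_ifs with hij <;> simp [hij]

instance psplit_finite [Finite (PThread Q)] : Finite (PSplit Q) :=
  Finite.of_injective
    (fun h : PSplit Q => (⟨h.thread, ⟨h.idx, Nat.lt_succ_of_le (idx_le h)⟩⟩ :
      (t : PThread Q) × Fin (t.1.arrows.length + 1))) (by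
    intro h h' hh
    have h1 : h.thread = h'.thread := congrArg Sigma.fst hh
    have h2 : h.idx = h'.idx := congrArg (fun s => (s.2 : ℕ)) hh
    exact psplit_ext _ _ h1 h2)

/-- The sum of `y` over the centers of the half-edges beyond `h`. -/
noncomputable def Ssum [Fintype (PSplit Q)] (y : V → ℤ) (h : PSplit Q) : ℤ :=
  ∑ h' : PSplit Q, if Lt h h' then y h'.center else 0

/-- Signed indicator of the source half-edges of a walk. -/
noncomputable def Aw : List (DOE Q) → PSplit Q → ℤ
  | [], _ => 0
  | i :: l, h => (if h = DOE.sS i then 1 else 0) - Aw l h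

/-- Signed indicator of the target half-edges of a walk. -/
noncomputable def Bw : List (DOE Q) → PSplit Q → ℤ
  | [], _ => 0
  | i :: l, h => (if h = DOE.tS i then 1 else 0) - Bw l h

theorem doe_ne (i : DOE Q) : DOE.tS i ≠ DOE.sS i := i.2.1

theorem doe_center (i : DOE Q) : (DOE.sS i).center = DOE.ctr i := i.2.2.symm

theorem lift_doe [Finite A] (hQ : Q.IsGentle) (i : DOE Q) (h : PSplit Q) :
    (if DOE.ctr i = h.center then (1 : ℤ) else 0) =
      (if h = DOE.tS i then 1 else 0) + (if h = DOE.sS i then 1 else 0) := by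
  obtain ⟨p, q, hpq, H⟩ := two_splits hQ (DOE.ctr i)
  have h1 := (H (DOE.tS i)).1 rfl
  have h2 := (H (DOE.sS i)).1 (doe_center i)
  have h3 := doe_ne i
  have h4 := H h
  have h5 : h.center = DOE.ctr i ↔ (h = DOE.tS i ∨ h = DOE.sS i) := by
    rw [h4]
    rcases h1 with h1 | h1 <;> rcases h2 with h2 | h2
    · exact absurd (h1.trans h2.symm) h3
    · rw [h1, h2]
    · rw [h1, h2]; tauto
    · exact absurd (h1.trans h2.symm) h3
  by_cases hc : h.center = DOE.ctr i
  · rw [if_pos hc.symm]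
    rcases h5.1 hc with e | e
    · rw [if_pos e, if_neg (fun e' => h3 (e.symm.trans e'))]; rfl
    · rw [if_pos e, if_neg (fun e' => h3 (e'.symm.trans e))]; rfl
  · rw [if_neg (fun e => hc e.symm), if_neg (fun e => hc (h5.2 (Or.inl e))),
      if_neg (fun e => hc (h5.2 (Or.inr e)))]; rfl

theorem inc_center [Finite A] (hQ : Q.IsGentle) (l : List (DOE Q)) (h : PSplit Q) :
    incVec l h.center = Aw l h + Bw l h := by
  induction l with
  | nil => simp [incVec, Aw, Bw]
  | cons i l ih =>
    simp only [incVec, Aw, Bw]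
    rw [ih, lift_doe hQ]; ring

theorem ssum_cons [Finite A] (hQ : Q.IsGentle) [Fintype (PSplit Q)] (i : DOE Q)
    (l : List (DOE Q)) (h : PSplit Q) :
    Ssum (incVec (i :: l)) h = (if Lt h (DOE.tS i) then 1 else 0) +
      (if Lt h (DOE.sS i) then 1 else 0) - Ssum (incVec l) h := by
  have e : ∀ h' : PSplit Q, (if Lt h h' then incVec (i :: l) h'.center else 0) =
      (if h' = DOE.tS i then (if Lt h (DOE.tS i) then 1 else 0) else 0) +
      (if h' = DOE.sS i then (if Lt h (DOE.sS i) then 1 else 0) else 0) -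
      (if Lt h h' then incVec l h'.center else 0) := by
    intro h'
    simp only [incVec]
    rw [lift_doe hQ]
    by_cases h1 : h' = DOE.tS i <;> by_cases h2 : h' = DOE.sS i <;> by_cases h3 : Lt h h' <;>
      simp_all
  unfold Ssum
  rw [Finset.sum_congr rfl fun h' _ => e h', Finset.sum_sub_distrib, Finset.sum_add_distrib,
    Finset.sum_ite_eq', Finset.sum_ite_eq']
  simp

theorem ssum_main [Finite A] (hQ : Q.IsGentle) [Fintype (PSplit Q)] (τ : PThread Q)
    (h : PSplit Q) (l : List (DOE Q)) : ∀ i : DOE Q,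
    List.IsChain (fun i j => DSucc (DOE.tS j) (DOE.sS i)) (i :: l) →
    (∀ j, (i :: l).getLast? = some j → (DOE.sS j).idx = τ.1.arrows.length ∧
      (DOE.sS j).thread = τ) →
    Ssum (incVec (i :: l)) h = (if Lt h (DOE.tS i) then 1 else 0) - Aw (i :: l) h +
      (-1) ^ l.length * (if h.thread = τ then 1 else 0) := by
  induction l with
  | nil =>
    intro i _ hlast
    obtain ⟨h1, h2⟩ := hlast i (by simp)
    rw [ssum_cons hQ]
    have h0 : Ssum (incVec ([] : List (DOE Q))) h = 0 := by simp [Ssum, incVec]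
    rw [h0]
    simp only [Aw, List.length_nil, pow_zero, one_mul, sub_zero]
    have e : (if Lt h (DOE.sS i) then (1 : ℤ) else 0) =
        (if h.thread = τ then 1 else 0) - (if h = DOE.sS i then 1 else 0) := by
      have hh := idx_le h
      by_cases ht : h.thread = τ
      · rw [ht] at hh
        by_cases he : h = DOE.sS i
        · have : ¬ Lt h (DOE.sS i) := by rw [he]; exact fun hl => lt_irrefl _ hl.2
          simp [ht, he, this, h2]
          exact fun hl => lt_irrefl _ hl.2
        · have : Lt h (DOE.sS i) := by
            refine ⟨by rw [ht, h2], ?_⟩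
            rcases lt_or_eq_of_le hh with hl | hl
            · omega
            · exact absurd (psplit_ext _ _ (by rw [ht, h2]) (by omega)) he
          simp [ht, he, this]
      · have a1 : ¬ Lt h (DOE.sS i) := fun hl => ht (by rw [hl.1, h2])
        have a2 : h ≠ DOE.sS i := fun hl => ht (by rw [hl, h2])
        simp [ht, a1, a2]
    rw [e]; ring
  | cons j l ih =>
    intro i hch hlast
    rw [List.isChain_cons_cons] at hch
    rw [List.getLast?_cons_cons] at hlast
    rw [ssum_cons hQ, ih j hch.2 hlast]
    obtain ⟨⟨h1, h2⟩, _⟩ := hch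
    have e : (if Lt h (DOE.sS i) then (1 : ℤ) else 0) =
        (if Lt h (DOE.tS j) then 1 else 0) - (if h = DOE.sS i then 1 else 0) := by
      by_cases ht : h.thread = (DOE.sS i).thread
      · rcases lt_trichotomy h.idx (DOE.sS i).idx with hl | hl | hl
        · have a1 : Lt h (DOE.sS i) := ⟨ht, hl⟩
          have a2 : Lt h (DOE.tS j) := ⟨by rw [ht, h1], by omega⟩
          have a3 : h ≠ DOE.sS i := fun e => by rw [e] at hl; omega
          simp [a1, a2, a3]
        · have a1 : ¬ Lt h (DOE.sS i) := fun e => by have := e.2; omega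
          have a2 : Lt h (DOE.tS j) := ⟨by rw [ht, h1], by omega⟩
          have a3 : h = DOE.sS i := psplit_ext _ _ ht hl
          rw [if_neg a1, if_pos a2, if_pos a3]; rfl
        · have a1 : ¬ Lt h (DOE.sS i) := fun e => by have := e.2; omega
          have a2 : ¬ Lt h (DOE.tS j) := fun e => by have := e.2; omega
          have a3 : h ≠ DOE.sS i := fun e => by rw [e] at hl; omega
          simp [a1, a2, a3]
      · have a1 : ¬ Lt h (DOE.sS i) := fun e => ht e.1
        have a2 : ¬ Lt h (DOE.tS j) := fun e => ht (by rw [e.1, h1])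
        have a3 : h ≠ DOE.sS i := fun e => ht (by rw [e])
        simp [a1, a2, a3]
    rw [e]
    simp only [Aw, List.length_cons, pow_succ]
    ring

theorem bw_tail (h : PSplit Q) (h0 : h.idx = 0) (l : List (DOE Q)) : ∀ i : DOE Q,
    List.IsChain (fun i j => DSucc (DOE.tS j) (DOE.sS i)) (i :: l) → Bw l h = 0 := by
  induction l with
  | nil => intro i _; rfl
  | cons j l ih =>
    intro i hch
    rw [List.isChain_cons_cons] at hch
    have : h ≠ DOE.tS j := fun e => by
      have := hch.1.2
      rw [e] at h0
      omega
    simp [Bw, this, ih j hch.2]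

theorem other_split [Finite A] (hQ : Q.IsGentle) (y : PSplit Q) :
    ∃ z : PSplit Q, z ≠ y ∧ z.center = y.center := by
  obtain ⟨p, q, hpq, H⟩ := two_splits hQ y.center
  rcases (H y).1 rfl with rfl | rfl
  · exact ⟨q, hpq.symm, (H q).2 (Or.inr rfl)⟩
  · exact ⟨p, hpq, (H p).2 (Or.inl rfl)⟩

theorem anti_head [Finite A] (hQ : Q.IsGentle) (i : DOE Q)
    (hm : ∀ i0 : DOE Q, ¬ DSucc (DOE.tS i) (DOE.sS i0)) : (DOE.tS i).idx = 0 := by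
  by_contra h0
  have hle := idx_le (DOE.tS i)
  let y : PSplit Q := ⟨((DOE.tS i).thread, (DOE.tS i).idx - 1), by
    show (DOE.tS i).idx - 1 ≤ (DOE.tS i).thread.1.arrows.length
    omega⟩
  obtain ⟨z, hz, hc⟩ := other_split hQ y
  refine hm ⟨(z, y), hz, hc⟩ ⟨rfl, ?_⟩
  show (DOE.tS i).idx = (DOE.tS i).idx - 1 + 1
  omega

theorem anti_last [Finite A] (hQ : Q.IsGentle) (i : DOE Q)
    (hm : ∀ i2 : DOE Q, ¬ DSucc (DOE.tS i2) (DOE.sS i)) :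
    (DOE.sS i).idx = (DOE.sS i).thread.1.arrows.length := by
  by_contra h0
  have hle := idx_le (DOE.sS i)
  let y : PSplit Q := ⟨((DOE.sS i).thread, (DOE.sS i).idx + 1), by
    show (DOE.sS i).idx + 1 ≤ (DOE.sS i).thread.1.arrows.length
    omega⟩
  obtain ⟨z, hz, hc⟩ := other_split hQ y
  exact hm ⟨(y, z), hz.symm, hc.symm⟩ ⟨rfl, rfl⟩

theorem mul_cartan [Finite A] (hQ : Q.IsGentle) [Fintype V] [Fintype (PSplit Q)]
    (v : V) (y : V → ℤ) :
    ∑ j, cartan Q v j * y j = y v + ∑ h : PSplit Q, if h.center = v then Ssum y h else 0 := by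
  have e : ∀ j, cartan Q v j = (if v = j then 1 else 0) +
      ∑ h : PSplit Q, ∑ h' : PSplit Q,
        if Lt h h' ∧ h.center = v ∧ h'.center = j then (1 : ℤ) else 0 := by
    intro j
    unfold cartan
    rw [cartan_card hQ, Nat.card_eq_fintype_card, Fintype.card_subtype, ← Fintype.sum_prod_type'
      (f := fun h h' : PSplit Q => if Lt h h' ∧ h.center = v ∧ h'.center = j then (1 : ℤ) else 0),
      Finset.sum_boole]
    push_cast
    rfl
  simp only [e, add_mul, Finset.sum_add_distrib]
  congr 1
  · simp
  · simp only [Finset.sum_mul]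
    rw [Finset.sum_comm]
    refine Finset.sum_congr rfl fun h _ => ?_
    rw [Finset.sum_comm]
    by_cases hc : h.center = v
    · rw [if_pos hc]
      unfold Ssum
      refine Finset.sum_congr rfl fun h' _ => ?_
      by_cases hl : Lt h h' <;> simp [hc, hl]
    · simp [hc]

theorem sum_aw [Fintype (PSplit Q)] (v : V) (l : List (DOE Q)) :
    (∑ h : PSplit Q, if h.center = v then Aw l h else 0) = incVec l v := by
  induction l with
  | nil => simp [Aw, incVec]
  | cons i l ih =>
    simp only [incVec]
    rw [← ih]
    have e : ∀ h : PSplit Q, (if h.center = v then Aw (i :: l) h else 0) =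
      (if h = DOE.sS i then (if DOE.ctr i = v then 1 else 0) else 0) -
        (if h.center = v then Aw l h else 0) := by
      intro h
      simp only [Aw]
      by_cases h1 : h = DOE.sS i
      · subst h1
        rw [doe_center]
        by_cases h2 : DOE.ctr i = v <;> simp [h2]
      · by_cases h2 : h.center = v <;> simp [h1, h2]
    rw [Finset.sum_congr rfl fun h _ => e h, Finset.sum_sub_distrib, Finset.sum_ite_eq']
    simp

theorem anti_ssum [Finite A] (hQ : Q.IsGentle) [Fintype (PSplit Q)] (τ : PThread Q)
    (l : List (DOE Q)) (hl : IsAntiDW Q l)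
    (hs : ∀ i, l.getLast? = some i → DOE.svx i = τ) (h : PSplit Q) :
    Ssum (incVec l) h = - Aw l h - (-1) ^ l.length * (if h.thread = τ then 1 else 0) := by
  obtain ⟨h0, _, hch, hhd, hlast⟩ := hl
  cases l with
  | nil => exact absurd rfl h0
  | cons i l =>
    rw [ssum_main hQ τ h l i hch]
    · have := anti_head hQ i (hhd i (by simp))
      have : ¬ Lt h (DOE.tS i) := fun hl => by have := hl.2; omega
      rw [if_neg this, List.length_cons, pow_succ]
      ring
    · intro j hj
      have h1 := anti_last hQ j (hlast j hj)
      have h2 := hs j hj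
      refine ⟨?_, h2⟩
      rw [h1]
      have : (DOE.sS j).thread = τ := h2
      rw [this]

theorem cartan_inc [Finite A] (hQ : Q.IsGentle) [Fintype V] [Fintype (PSplit Q)] (τ : PThread Q)
    (l : List (DOE Q)) (hl : IsAntiDW Q l)
    (hs : ∀ i, l.getLast? = some i → DOE.svx i = τ) (v : V) :
    ∑ j, cartan Q v j * incVec l j =
      - (-1) ^ l.length * ∑ h : PSplit Q, if h.center = v ∧ h.thread = τ then 1 else 0 := by
  rw [mul_cartan hQ]
  have e : ∀ h : PSplit Q, (if h.center = v then Ssum (incVec l) h else 0) =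
      - (if h.center = v then Aw l h else 0) +
      - (-1) ^ l.length * (if h.center = v ∧ h.thread = τ then 1 else 0) := by
    intro h
    rw [anti_ssum hQ τ l hl hs]
    by_cases h1 : h.center = v <;> by_cases h2 : h.thread = τ <;> simp [h1, h2] <;> ring
  rw [Finset.sum_congr rfl fun h _ => e h, Finset.sum_add_distrib, Finset.sum_neg_distrib,
    sum_aw, ← Finset.mul_sum]
  ring

theorem inc_thread [Finite A] (hQ : Q.IsGentle) [Fintype V] [Fintype (PSplit Q)]
    (γ β τ : PThread Q) (l : List (DOE Q)) (hl : IsAntiDW Q l)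
    (ht : ∀ i, l.head? = some i → DOE.tvx i = β)
    (hs : ∀ i, l.getLast? = some i → DOE.svx i = τ) :
    ∑ v, incVec l v * (∑ h : PSplit Q, if h.center = v ∧ h.thread = γ then 1 else 0) =
      (if γ = β then 1 else 0) - (-1) ^ l.length * (if γ = τ then 1 else 0) := by
  let h0 : PSplit Q := ⟨(γ, 0), Nat.zero_le _⟩
  have h0t : h0.thread = γ := rfl
  have h0i : h0.idx = 0 := rfl
  have e1 : ∑ v, incVec l v * (∑ h : PSplit Q, if h.center = v ∧ h.thread = γ then (1 : ℤ) else 0)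
      = ∑ h : PSplit Q, if h.thread = γ then incVec l h.center else 0 := by
    simp only [Finset.mul_sum]
    rw [Finset.sum_comm]
    refine Finset.sum_congr rfl fun h _ => ?_
    by_cases hc : h.thread = γ <;> simp [hc]
  have e2 : ∀ h : PSplit Q, (if h.thread = γ then incVec l h.center else 0) =
      (if h = h0 then incVec l h0.center else 0) + (if Lt h0 h then incVec l h.center else 0) := by
    intro h
    by_cases hc : h = h0
    · rw [hc]
      have : ¬ Lt h0 h0 := fun hl => lt_irrefl _ hl.2
      rw [if_pos h0t, if_pos rfl, if_neg this, add_zero]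
    · by_cases ht : h.thread = γ
      · have : Lt h0 h := by
          refine ⟨by rw [ht, h0t], ?_⟩
          rw [h0i]
          refine Nat.pos_of_ne_zero fun hz => hc (psplit_ext _ _ (by rw [ht, h0t]) (by rw [hz, h0i]))
        simp [hc, ht, this]
      · have : ¬ Lt h0 h := fun hl => ht (by rw [← hl.1, h0t])
        simp [hc, ht, this]
  rw [e1, Finset.sum_congr rfl fun h _ => e2 h, Finset.sum_add_distrib, Finset.sum_ite_eq']
  have e3 := anti_ssum hQ τ l hl hs h0
  unfold Ssum at e3
  rw [e3, inc_center hQ, h0t]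
  have e4 : Bw l h0 = if γ = β then 1 else 0 := by
    obtain ⟨hn, _, hch, hhd, _⟩ := hl
    cases l with
    | nil => exact absurd rfl hn
    | cons i l =>
      have a1 := anti_head hQ i (hhd i (by simp))
      have a2 : (DOE.tS i).thread = β := ht i (by simp)
      simp only [Bw]
      rw [bw_tail h0 h0i l i hch, sub_zero]
      have : h0 = DOE.tS i ↔ γ = β := by
        constructor
        · intro e; rw [← h0t, e, a2]
        · intro e; exact psplit_ext _ _ (by rw [h0t, a2, e]) (by rw [h0i, a1])
      simp [this]
  rw [e4]
  simp
  ring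

end BQuiv

/-- Let `(Q, I)` be a gentle bound quiver with marked ribbon graph
`(G, ≤) = △(Q, I)` and Cartan matrix `C`; set `n = |Q₀| = |E(G)|` and `m = |V(G)|`.
Let `Ĵ` be the `E(G) × V(G)` integer matrix whose column at a vertex `α` is the
incidence vector of the unique anti-walk `Ǒ_α` with target vertex `α`, let `ξ` be the
permutation of `V(G)` sending `α` to the source vertex of `Ǒ_α`, and let `ℓ(Ǒ_α)` be
its length.  Then:
(i) `1 - Ĵᵀ C Ĵ` is the signed permutation matrix sending `e_α` to
`(-1)^{ℓ(Ǒ_α)} e_{ξ α}`;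
(ii) the characteristic polynomial of `1 - Ĵ Ĵᵀ Cᵀ` equals
`(z - 1)^{n - m} ∏_O (z^{|O|} - ∏_{α ∈ O} (-1)^{ℓ(Ǒ_α)})`, the product running over the
orbits `O` of `ξ` (stated multiplied through by `(z - 1)^m` to avoid a possibly
negative exponent; the orbits are encoded by a set of representatives, one per cycle of
`ξ`).  This computes the Coxeter polynomial `ψ_A(z)` of the gentle algebra `A = kQ/I`
and yields the formula of Theorem C in terms of the Avella-Alaminos–Geiss invariant. -/
theorem stmt19 {V A : Type} [Fintype V] [Fintype A] [DecidableEq V]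
    (Q : BQuiv V A) (hQ : Q.IsGentle)
    (W : Type) [Fintype W] [DecidableEq W] (e : W ≃ PThread Q)
    (J : Matrix V W ℤ) (ξ : Equiv.Perm W) (len : W → ℕ)
    (hJ : ∀ w : W, ∃ l : List (DOE Q), IsAntiDW Q l ∧
      (∀ i, l.head? = some i → DOE.tvx i = e w) ∧
      (∀ i, l.getLast? = some i → DOE.svx i = e (ξ w)) ∧
      l.length = len w ∧
      (∀ v : V, J v w = incVec l v)) :
    (∀ β α : W, ((1 : Matrix W W ℤ) - Jᵀ * cartan Q * J) β α =
        if β = ξ α then (-1 : ℤ) ^ len α else 0) ∧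
    (∀ Rset : Finset W, (∀ a : W, ∃! r, r ∈ Rset ∧ ξ.SameCycle r a) →
      (X - 1) ^ (Fintype.card W) *
          ((1 : Matrix V V ℤ) - J * Jᵀ * (cartan Q)ᵀ).charpoly =
        (X - 1) ^ (Fintype.card V) *
          ∏ r ∈ Rset,
            ((X : ℤ[X]) ^ (Nat.card {b : W // ξ.SameCycle r b}) -
              C ((-1 : ℤ) ^ (∑ᶠ b ∈ {b : W | ξ.SameCycle r b}, len b)))) := by
  have key : ∀ β α : W, ((1 : Matrix W W ℤ) - Jᵀ * cartan Q * J) β α =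
        if β = ξ α then (-1 : ℤ) ^ len α else 0 := by
    have : Finite (PThread Q) := Finite.of_equiv W e
    have : Fintype (PSplit Q) := Fintype.ofFinite _
    choose L hL1 hL2 hL3 hL4 hL5 using hJ
    intro β α
    have hJe : ∀ v w, J v w = incVec (L w) v := fun v w => hL5 w v
    have h1 : (Jᵀ * cartan Q * J) β α = ∑ v, incVec (L β) v *
        ∑ j, cartan Q v j * incVec (L α) j := by
      rw [Matrix.mul_assoc, Matrix.mul_apply]
      refine Finset.sum_congr rfl fun v _ => ?_
      rw [Matrix.mul_apply, Matrix.transpose_apply, hJe]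
      congr 1
      refine Finset.sum_congr rfl fun j _ => ?_
      rw [hJe]
    have h2 : (Jᵀ * cartan Q * J) β α = -(-1) ^ len α *
        ((if e (ξ α) = e β then 1 else 0) -
          (-1) ^ len β * (if e (ξ α) = e (ξ β) then 1 else 0)) := by
      rw [h1, ← hL4 β, ← inc_thread hQ (e (ξ α)) (e β) (e (ξ β)) (L β) (hL1 β) (hL2 β) (hL3 β),
        Finset.mul_sum]
      refine Finset.sum_congr rfl fun v _ => ?_
      rw [cartan_inc hQ (e (ξ α)) (L α) (hL1 α) (hL3 α), hL4 α]
      ring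
    rw [Matrix.sub_apply, h2]
    simp only [e.injective.eq_iff, ξ.injective.eq_iff, Matrix.one_apply]
    have hsq : ((-1 : ℤ) ^ len α) * (-1) ^ len α = 1 := by
      rw [← pow_add, ← two_mul, pow_mul]; simp
    by_cases hab : α = β
    · subst hab
      by_cases hx : α = ξ α
      · rw [if_pos hx.symm, if_pos hx]
        simp only [if_true]
        linear_combination -hsq
      · have hx' : ¬ ξ α = α := fun h => hx h.symm
        simp only [hx, hx', if_true, if_false]
        linear_combination -hsq
    · rw [if_neg hab, if_neg (fun h => hab h.symm)]
      by_cases hx : β = ξ α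
      · rw [if_pos hx.symm, if_pos hx]; ring
      · rw [if_neg (fun h => hx h.symm), if_neg hx]; ring
  refine ⟨key, fun Rset hR => ?_⟩
  rw [part_two, sperm_charpoly _ ξ len key Rset hR]
end
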